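/- arXiv:1112.4878 — 2 statements merged into one kernel-verified Lean document; each statement's English description precedes it below -/
import Mathlib

section
/- Let G be a semitopological semigroup and 𝒜 a norm-closed subalgebra of CB(G) that is left m-introverted. Then for any characters χ, χ' ∈ Φ_𝒜, the functional χ □ χ' : f ↦ χ(χ'·f) is either the zero functional or again a character of 𝒜; that is, Φ_𝒜 ∪ {0} is closed under the left Arens product. If moreover the constant function 1 belongs to 𝒜, then χ □ χ' ∈ Φ_𝒜 for all χ, χ' ∈ Φ_𝒜. -/
/-!
For fixed `s`, translation `f ↦ f·s` is a contractive algebra endomorphism of `𝒜`, so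
`f ↦ χ'(f·s)` is linear, multiplicative and bounded by `‖χ'‖ ‖f‖`, uniformly in `s`. Since the
operations of `𝒜` are pointwise, `f ↦ χ'·f` is a bounded multiplicative linear map `𝒜 → 𝒜`.
Composing it with `χ` gives a bounded multiplicative functional, which is a character as soon as
it is nonzero. If `1 ∈ 𝒜`, every character takes the value `1` at `1`, whence `χ'·1 = 1` and
`(χ □ χ')(1) = χ(1) = 1 ≠ 0`.
-/


set_option maxHeartbeats 1000000
set_option synthInstance.maxHeartbeats 400000

open BoundedContinuousFunction

/-- The right translate `f·s` of `f ∈ CB(G)`, given by `(f·s)(t) = f (s * t)`. -/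
noncomputable def lTrans {G : Type*} [TopologicalSpace G] [Mul G]
    (f : G →ᵇ ℂ) (s : G) (h : Continuous fun t : G => s * t) : G →ᵇ ℂ :=
  f.compContinuous ⟨fun t => s * t, h⟩

/-- Let `G` be a semitopological semigroup and `𝒜` a norm-closed,
left-translation invariant, left m-introverted subalgebra of `CB(G)`.  For characters
`χ, χ'` of `𝒜`, the functional `χ □ χ' : f ↦ χ (χ'·f)` is either zero or again a character
of `𝒜`; and if the constant function `1` belongs to `𝒜` then `χ □ χ'` is always a
character. -/
theorem arens_product_of_characters
    {G : Type*} [TopologicalSpace G] [T2Space G] [Semigroup G]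
    (hmul_left : ∀ t : G, Continuous fun s => s * t)
    (hmul_right : ∀ t : G, Continuous fun s => t * s)
    (A : NonUnitalSubalgebra ℂ (G →ᵇ ℂ))
    (hclosed : IsClosed (A : Set (G →ᵇ ℂ)))
    (htrans : ∀ f ∈ A, ∀ s : G, lTrans f s (hmul_right s) ∈ A)
    (hmint : ∀ (χ : WeakDual.characterSpace ℂ ↥A) (f : ↥A),
      ∃ g : ↥A, ∀ s : G,
        (g : G →ᵇ ℂ) s = χ (⟨lTrans (f : G →ᵇ ℂ) s (hmul_right s), htrans _ f.2 s⟩ : ↥A)) :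
    ∀ (χ χ' : WeakDual.characterSpace ℂ ↥A) (T : ↥A → ↥A),
      (∀ (f : ↥A) (s : G),
        (T f : G →ᵇ ℂ) s
          = χ' (⟨lTrans (f : G →ᵇ ℂ) s (hmul_right s), htrans _ f.2 s⟩ : ↥A)) →
      (((∀ f : ↥A, χ (T f) = 0) ∨
        ∃ χ'' : WeakDual.characterSpace ℂ ↥A, ∀ f : ↥A, χ'' f = χ (T f)) ∧
       ((1 : G →ᵇ ℂ) ∈ A →
        ∃ χ'' : WeakDual.characterSpace ℂ ↥A, ∀ f : ↥A, χ'' f = χ (T f))) := by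
  intro χ χ' T hT
  have hadd : ∀ f g, T (f + g) = T f + T g := by
    intro f g
    apply Subtype.ext
    ext s
    have h : (T f + T g : G →ᵇ ℂ) s = (T f : G →ᵇ ℂ) s + (T g : G →ᵇ ℂ) s := rfl
    refine Eq.trans ?_ h.symm
    rw [hT, hT, hT, ← map_add]
    rfl
  have hsmul : ∀ (c : ℂ) f, T (c • f) = c • T f := by
    intro c f
    apply Subtype.ext
    ext s
    have h : ((c • T f : ↥A) : G →ᵇ ℂ) s = c • (T f : G →ᵇ ℂ) s := rfl
    rw [h, hT, hT, ← map_smul]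
    rfl
  have hmul : ∀ f g, T (f * g) = T f * T g := by
    intro f g
    apply Subtype.ext
    ext s
    have h : ((T f * T g : ↥A) : G →ᵇ ℂ) s = (T f : G →ᵇ ℂ) s * (T g : G →ᵇ ℂ) s := rfl
    rw [h, hT, hT, hT, ← map_mul]
    rfl
  -- `A` and `A.toSubmodule` have the same carrier, topology and module structure; the latter
  -- carries the normed-space structure in which continuity is the same as boundedness.
  obtain ⟨C, hC, hχ'⟩ : ∃ C : ℝ, 0 ≤ C ∧ ∀ f : ↥A, ‖χ' f‖ ≤ C * ‖(f : G →ᵇ ℂ)‖ := by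
    let ψ : ↥A.toSubmodule →L[ℂ] ℂ := WeakDual.CharacterSpace.toCLM χ'
    exact ⟨‖ψ‖, norm_nonneg ψ, fun f => ψ.le_opNorm f⟩
  have hbound : ∀ f, ‖(T f : G →ᵇ ℂ)‖ ≤ C * ‖(f : G →ᵇ ℂ)‖ := by
    intro f
    refine (BoundedContinuousFunction.norm_le (by positivity)).2 fun s => ?_
    rw [hT]
    refine (hχ' _).trans (mul_le_mul_of_nonneg_left ?_ hC)
    exact (BoundedContinuousFunction.norm_le (norm_nonneg _)).2 fun t =>
      (f : G →ᵇ ℂ).norm_coe_le_norm (s * t)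
  let TL : ↥A →ₗ[ℂ] ↥A := { toFun := T, map_add' := hadd, map_smul' := hsmul }
  have hcont : Continuous TL := by
    let L : ↥A.toSubmodule →ₗ[ℂ] ↥A.toSubmodule := TL
    exact (L.mkContinuous C hbound).continuous
  let Φ : ↥A →L[ℂ] ℂ := (WeakDual.CharacterSpace.toCLM χ).comp ⟨TL, hcont⟩
  have key : ∀ f₀, χ (T f₀) ≠ 0 →
      ∃ χ'' : WeakDual.characterSpace ℂ ↥A, ∀ f : ↥A, χ'' f = χ (T f) := by
    intro f₀ h₀
    refine ⟨⟨(Φ : WeakDual ℂ ↥A), ?_, ?_⟩, fun f => rfl⟩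
    · intro h
      exact h₀ (DFunLike.congr_fun h f₀)
    · intro f g
      change χ (T (f * g)) = χ (T f) * χ (T g)
      rw [hmul, map_mul]
  refine ⟨?_, fun h1 => ?_⟩
  · by_cases h : ∀ f : ↥A, χ (T f) = 0
    · exact Or.inl h
    · push Not at h
      obtain ⟨f₀, h₀⟩ := h
      exact Or.inr (key f₀ h₀)
  · have hone : ∀ ψ : WeakDual.characterSpace ℂ ↥A, ψ ⟨1, h1⟩ = 1 := by
      intro ψ
      obtain ⟨f, hf⟩ : ∃ f, ψ f ≠ 0 := by
        by_contra! h
        exact ψ.2.1 (DFunLike.ext _ _ h)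
      have hm : ψ ⟨1, h1⟩ * ψ f = 1 * ψ f := by
        rw [← map_mul, one_mul]
        exact congrArg ψ (Subtype.ext (one_mul (f : G →ᵇ ℂ)))
      exact mul_right_cancel₀ hf hm
    have hT1 : T ⟨1, h1⟩ = ⟨1, h1⟩ := by
      apply Subtype.ext
      ext s
      rw [hT]
      exact hone χ'
    refine key ⟨1, h1⟩ ?_
    rw [hT1, hone]
    exact one_ne_zero
end

section
/- Let S be a subsemigroup of the additive semigroup of non-negative integers with S \ {0} nonempty, and let d = gcd(S \ {0}) (so d divides every element of S). For z ∈ ℂ with |z| ≤ 1 define σ_z : S → ℂ by σ_z(s) = z^{s/d}, with the conventions σ_0(0) = 1 and σ_0(s) = 0 for s ≠ 0. Then every semicharacter σ : S → ℂ (i.e. |σ(s)| ≤ 1 for all s, σ(s+t) = σ(s)σ(t), and σ not identically 0) equals σ_z for a unique z in the closed unit disc; consequently z ↦ σ_z is a bijection from the closed unit disc onto the set of semicharacters of S when 0 ∈ S, and from the punctured closed unit disc (z ≠ 0) onto the semicharacters when 0 ∉ S. -/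
/-!
Write `S = d T` with `gcd T = 1`. By the Frobenius theorem for numerical semigroups, `S` contains
`a = d m` and `b = d (m + 1)` for some `m ≥ 1` (`exists_consecutive_multiples_mem`). The value
`z = σ b / σ a` is therefore forced when `σ a ≠ 0`, and it works: for `s = d k` in `S` the identity
`k b = k a + s` gives `σ b ^ k = σ a ^ k * σ s`, that is `σ s = z ^ k`. If instead `σ a = 0`, then
`σ t ^ a = σ a ^ t` forces `σ` to vanish at every nonzero `t ∈ S`, so `z = 0`. Uniqueness holds
because `z ^ m` and `z ^ (m + 1)` determine `z`.
-/

/-- A bounded semicharacter on a subsemigroup `S` of `(ℕ, +)`: a function with values of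
modulus at most `1`, multiplicative on `S`, and not identically zero on `S`. -/
def IsNatSemichar (S : Set ℕ) (σ : ℕ → ℂ) : Prop :=
  (∀ s ∈ S, ‖σ s‖ ≤ 1) ∧
  (∀ s ∈ S, ∀ t ∈ S, σ (s + t) = σ s * σ t) ∧
  (∃ s ∈ S, σ s ≠ 0)

/-- An additive subsemigroup of `ℕ` contains two consecutive positive multiples of `d ≠ 0` as soon
as every common divisor of its nonzero elements divides `d`. -/
lemma exists_consecutive_multiples_mem {S : Set ℕ} (hadd : ∀ s ∈ S, ∀ t ∈ S, s + t ∈ S)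
    {d : ℕ} (hd : d ≠ 0) (hd_gcd : ∀ c : ℕ, (∀ s ∈ S, s ≠ 0 → c ∣ s) → c ∣ d) :
    ∃ m : ℕ, m ≠ 0 ∧ d * m ∈ S ∧ d * (m + 1) ∈ S := by
  obtain ⟨n, hn⟩ := Nat.exists_mem_closure_of_ge S
  have hgcd : Nat.setGcd S ∣ d := hd_gcd _ fun s hs _ => Nat.setGcd_dvd_of_mem hs
  -- `S` need not contain `0`, so it may differ from the submonoid it generates, but only at `0`.
  have hcl : ∀ x ∈ AddSubmonoid.closure S, x = 0 ∨ x ∈ S := by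
    intro x hx
    induction hx using AddSubmonoid.closure_induction with
    | mem x hx => exact .inr hx
    | zero => exact .inl rfl
    | add x y _ _ hx hy =>
      rcases hx with rfl | hx
      · simpa using hy
      rcases hy with rfl | hy
      · simpa using Or.inr hx
      exact .inr (hadd x hx y hy)
  have key : ∀ m, n < m → d * m ∈ S := fun m hm =>
    (hcl _ (hn _ (hm.le.trans (Nat.le_mul_of_pos_left m (Nat.pos_of_ne_zero hd)))
      (hgcd.mul_right m))).resolve_left (Nat.mul_ne_zero hd (by lia))
  exact ⟨n + 1, by lia, key _ (by lia), key _ (by lia)⟩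

lemma semichar_mul {S : Set ℕ} (hadd : ∀ s ∈ S, ∀ t ∈ S, s + t ∈ S) {σ : ℕ → ℂ}
    (hσ : ∀ s ∈ S, ∀ t ∈ S, σ (s + t) = σ s * σ t) {s : ℕ} (hs : s ∈ S) {k : ℕ} (hk : k ≠ 0) :
    k * s ∈ S ∧ σ (k * s) = σ s ^ k := by
  induction k, Nat.one_le_iff_ne_zero.mpr hk using Nat.le_induction with
  | base => simpa using hs
  | succ k hk' ih =>
    obtain ⟨h1, h2⟩ := ih (by lia)
    rw [add_mul, one_mul, pow_succ, ← h2]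
    exact ⟨hadd _ h1 _ hs, hσ _ h1 _ hs⟩

/-- A semicharacter is `s ↦ z ^ (s / d)` for some `z`, given consecutive positive multiples
`d * m` and `d * (m + 1)` of `d` in `S`. No bound on `z` is claimed here. -/
lemma semichar_eq_pow {S : Set ℕ} (hadd : ∀ s ∈ S, ∀ t ∈ S, s + t ∈ S)
    {d : ℕ} (hd : d ≠ 0) (hd_dvd : ∀ s ∈ S, d ∣ s)
    {m : ℕ} (hm : m ≠ 0) (ha : d * m ∈ S) (hb : d * (m + 1) ∈ S)
    {σ : ℕ → ℂ} (hσ : IsNatSemichar S σ) :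
    ∃ z : ℂ, ∀ s ∈ S, σ s = z ^ (s / d) := by
  obtain ⟨-, hmul, s₀, hs₀, hne⟩ := hσ
  by_cases h0 : σ (d * m) = 0
  · have hvan : ∀ t ∈ S, t ≠ 0 → σ t = 0 := by
      intro t ht ht0
      have h1 := (semichar_mul hadd hmul ha ht0).2
      have h2 := (semichar_mul hadd hmul ht (Nat.mul_ne_zero hd hm)).2
      rw [mul_comm, h1, h0, zero_pow ht0] at h2
      exact eq_zero_of_pow_eq_zero h2.symm
    refine ⟨0, fun s hs => ?_⟩
    by_cases hs0 : s = 0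
    · -- As `σ` is not identically zero, it is nonzero at `0`, where it is idempotent.
      obtain rfl : s₀ = 0 := by_contra fun h => hne (hvan s₀ hs₀ h)
      have h := hmul 0 hs₀ 0 hs₀
      rw [add_zero] at h
      subst hs0
      simpa using (mul_eq_left₀ hne).mp h.symm
    · rw [hvan s hs hs0, zero_pow]
      exact (Nat.div_pos (Nat.le_of_dvd (Nat.pos_of_ne_zero hs0) (hd_dvd s hs))
        (Nat.pos_of_ne_zero hd)).ne'
  · refine ⟨σ (d * (m + 1)) / σ (d * m), fun s hs => ?_⟩
    obtain ⟨k, rfl⟩ := hd_dvd s hs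
    rw [Nat.mul_div_cancel_left k (Nat.pos_of_ne_zero hd)]
    by_cases hk : k = 0
    · subst hk
      have h := hmul _ ha _ hs
      rw [mul_zero, add_zero] at h
      simpa using (mul_eq_left₀ h0).mp h.symm
    · obtain ⟨hka, h1⟩ := semichar_mul hadd hmul ha hk
      have h2 := (semichar_mul hadd hmul hb hk).2
      have h3 := hmul _ hka _ hs
      rw [show k * (d * m) + d * k = k * (d * (m + 1)) by ring, h1, h2] at h3
      rw [div_pow, h3, mul_div_cancel_left₀ _ (pow_ne_zero k h0)]

lemma isNatSemichar_pow {S : Set ℕ} {d : ℕ} (hd_dvd : ∀ s ∈ S, d ∣ s) {z : ℂ} (hz : ‖z‖ ≤ 1)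
    (hne : ∃ s ∈ S, z ^ (s / d) ≠ 0) : IsNatSemichar S (fun s => z ^ (s / d)) := by
  refine ⟨fun s _ => ?_, fun s hs t _ => ?_, hne⟩
  · rw [norm_pow]
    exact pow_le_one₀ (norm_nonneg z) hz
  · simp only
    rw [Nat.add_div_of_dvd_right (hd_dvd s hs), pow_add]

/-- Let `S` be an additive subsemigroup of the non-negative integers with
`S \ {0}` nonempty, and let `d = gcd (S \ {0})`.  Every semicharacter of `S` is of the form
`s ↦ z ^ (s / d)` for a unique `z` in the closed unit disc; moreover for `z` in the closed
unit disc, `s ↦ z ^ (s / d)` is a semicharacter of `S` whenever `0 ∈ S`, while if `0 ∉ S`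
it is a semicharacter exactly when `z ≠ 0`.  (With natural number powers, `0 ^ 0 = 1`,
matching the convention `σ₀(0) = 1`, `σ₀(s) = 0` for `s ≠ 0`.) -/
theorem semicharacters_of_nat_subsemigroup
    (S : Set ℕ) (hadd : ∀ s ∈ S, ∀ t ∈ S, s + t ∈ S)
    (hne : ∃ s ∈ S, s ≠ 0)
    (d : ℕ)
    (hd_dvd : ∀ s ∈ S, d ∣ s)
    (hd_gcd : ∀ c : ℕ, (∀ s ∈ S, s ≠ 0 → c ∣ s) → c ∣ d) :
    (∀ σ : ℕ → ℂ, IsNatSemichar S σ →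
      ∃! z : ℂ, ‖z‖ ≤ 1 ∧ ∀ s ∈ S, σ s = z ^ (s / d)) ∧
    ((0 : ℕ) ∈ S → ∀ z : ℂ, ‖z‖ ≤ 1 → IsNatSemichar S (fun s => z ^ (s / d))) ∧
    ((0 : ℕ) ∉ S → ∀ z : ℂ, ‖z‖ ≤ 1 →
      (IsNatSemichar S (fun s => z ^ (s / d)) ↔ z ≠ 0)) := by
  have hd : d ≠ 0 := by
    rintro rfl
    obtain ⟨s, hs, hs0⟩ := hne
    exact hs0 (zero_dvd_iff.mp (hd_dvd s hs))
  have hd' := Nat.pos_of_ne_zero hd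
  refine ⟨fun σ hσ => ?_, fun h0 z hz => ?_, fun h0 z hz => ⟨?_, fun hz0 => ?_⟩⟩
  · obtain ⟨m, hm, ha, hb⟩ := exists_consecutive_multiples_mem hadd hd hd_gcd
    obtain ⟨z, hz⟩ := semichar_eq_pow hadd hd hd_dvd hm ha hb hσ
    have hza := hz _ ha
    have hzb := hz _ hb
    rw [Nat.mul_div_cancel_left _ hd'] at hza hzb
    refine ⟨z, ⟨?_, hz⟩, fun w ⟨_, hw⟩ => ?_⟩
    · have h := hσ.1 _ ha
      rw [hza, norm_pow] at h
      exact (pow_le_one_iff_of_nonneg (norm_nonneg z) hm).mp h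
    · have hwa := hw _ ha
      have hwb := hw _ hb
      rw [Nat.mul_div_cancel_left _ hd'] at hwa hwb
      have h1 : w ^ m = z ^ m := hwa.symm.trans hza
      have h2 : w ^ (m + 1) = z ^ (m + 1) := hwb.symm.trans hzb
      by_cases hz0 : z = 0
      · rw [hz0, zero_pow hm] at h1
        rw [hz0, eq_zero_of_pow_eq_zero h1]
      · rw [pow_succ, pow_succ, h1] at h2
        exact mul_left_cancel₀ (pow_ne_zero m hz0) h2
  · exact isNatSemichar_pow hd_dvd hz ⟨0, h0, by simp⟩
  · rintro ⟨-, -, s, hs, hsne⟩ rfl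
    have hs0 : s ≠ 0 := fun h => h0 (h ▸ hs)
    exact hsne (zero_pow
      (Nat.div_pos (Nat.le_of_dvd (Nat.pos_of_ne_zero hs0) (hd_dvd s hs)) hd').ne')
  · obtain ⟨s, hs, -⟩ := hne
    exact isNatSemichar_pow hd_dvd hz ⟨s, hs, pow_ne_zero _ hz0⟩
end
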